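/- For every function f on the hypercube {0,1}^n and every p ∈ [0,1), the expectation over ρ ~ R_p of DL(f↾ρ) is at most DL(f)^{γ(p)}, where γ(p) = log_{2/(1-p)}((1+p)/(1-p)). -/

import Mathlib

noncomputable def rpWeight {n : ℕ} (p : ℝ) (ρ : Fin n → Option Bool) : ℝ :=
  ∏ i, if ρ i = none then p else (1 - p) / 2

def restrictFun {n : ℕ} {V : Type} (f : (Fin n → Bool) → V) (ρ : Fin n → Option Bool) :
    (Fin n → Bool) → V :=
  fun x => f (fun i => (ρ i).getD (x i))

/-- `x` satisfies the conjunctive clause `C` (`C i = some b` means the literal `x i = b`). -/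
def clauseSat {n : ℕ} (C : Fin n → Option Bool) (x : Fin n → Bool) : Prop :=
  ∀ i : Fin n, ∀ b : Bool, C i = some b → x i = b

/-- The decision list `L` computes `f`: on each input `x` some clause is satisfied
(so the clauses form a tautology), and `f x` is the output of the first satisfied clause. -/
def DLcomputes {n : ℕ} {V : Type} (L : List ((Fin n → Option Bool) × V))
    (f : (Fin n → Bool) → V) : Prop :=
  ∀ x, ∃ k : Fin L.length, clauseSat (L.get k).1 x ∧
    (∀ j : Fin L.length, j < k → ¬ clauseSat (L.get j).1 x) ∧ f x = (L.get k).2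

/-- `DL(f)`: minimum size of a decision list computing `f`. -/
noncomputable def DLsize {n : ℕ} {V : Type} (f : (Fin n → Bool) → V) : ℕ :=
  sInf {m | ∃ L : List ((Fin n → Option Bool) × V), DLcomputes L f ∧ L.length = m}

/-!
Let `(C_k, v_k)` be an optimal decision list for `f` and `q = (1 - p) / 2`. Only the entries that
decide some point of the subcube of `ρ` matter for `f↾ρ`, so `DL(f↾ρ)` is at most their number.
Let `K` be the probability that entry `k` survives once `ρ` forgets its values on the variables of
`C_k`, and let `s` be the width of `C_k`. By independence, entry `k` survives with probability
`(1 - q) ^ s * K`, and it survives with `ρ` satisfying `C_k` with probability `q ^ s * K`. With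
`q ^ θ = 1 - q` the former is at most the `θ`-th power of the latter. For distinct `k` the latter
events are disjoint, so their probabilities sum to at most `1`, and concavity of `t ↦ t ^ θ` bounds
the expected number of surviving entries by `DL(f) ^ (1 - θ)`.
-/

section RealInequalities

theorem logb_inv_div_self {b x : ℝ} (hb₀ : 0 < b) (hb₁ : b ≠ 1) (hx : x ≠ 0) :
    Real.logb b⁻¹ (x / b) = 1 - Real.logb b x := by
  rw [Real.logb_inv_base, Real.logb_div hx hb₀.ne', Real.logb_self_eq_one_iff.2
    ⟨hb₀.ne', hb₁, by linarith⟩, neg_sub]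

theorem rpow_pow_mul_le_rpow {q t θ : ℝ} (hq : 0 ≤ q) (ht₀ : 0 ≤ t) (ht₁ : t ≤ 1) (hθ : θ ≤ 1)
    (s : ℕ) : (q ^ θ) ^ s * t ≤ (q ^ s * t) ^ θ := by
  rw [Real.mul_rpow (pow_nonneg hq s) ht₀, ← Real.rpow_natCast_mul hq, mul_comm (s : ℝ),
    Real.rpow_mul_natCast hq]
  exact mul_le_mul_of_nonneg_left (Real.self_le_rpow_of_le_one ht₀ ht₁ hθ) (by positivity)

theorem sum_rpow_le_card_rpow_mul_rpow_sum {ι : Type*} (s : Finset ι) {a : ι → ℝ}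
    (ha : ∀ i ∈ s, 0 ≤ a i) {θ : ℝ} (hθ₀ : 0 ≤ θ) (hθ₁ : θ ≤ 1) :
    ∑ i ∈ s, a i ^ θ ≤ (s.card : ℝ) ^ (1 - θ) * (∑ i ∈ s, a i) ^ θ := by
  rcases s.eq_empty_or_nonempty with rfl | hs
  · simpa using mul_nonneg (Real.rpow_nonneg le_rfl (1 - θ)) (Real.rpow_nonneg le_rfl θ)
  have hcard : (0 : ℝ) < s.card := by exact_mod_cast hs.card_pos
  have jensen := (Real.concaveOn_rpow hθ₀ hθ₁).le_map_sum
    (w := fun _ => (s.card : ℝ)⁻¹) (fun _ _ => by positivity) (by simp [hcard.ne']) ha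
  simp only [smul_eq_mul, ← Finset.mul_sum] at jensen
  rw [Real.mul_rpow (by positivity) (Finset.sum_nonneg ha), inv_mul_le_iff₀ hcard,
    Real.inv_rpow hcard.le] at jensen
  rwa [Real.rpow_sub hcard, Real.rpow_one, div_eq_mul_inv, mul_assoc]

end RealInequalities

section ProductWeights

variable {ι α R : Type*} [Fintype ι] [DecidableEq ι] [CommSemiring R]

theorem prod_sum_mul_sum_prod_mul_comm [Fintype α] (s : Finset ι) {u w : ι → α → R}
    (huw : ∀ i ∉ s, u i = w i) {G : (ι → α) → R} (hG : DependsOn G (s : Set ι)ᶜ) :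
    (∏ i ∈ s, ∑ a, w i a) * ∑ ρ : ι → α, (∏ i, u i (ρ i)) * G ρ =
      (∏ i ∈ s, ∑ a, u i a) * ∑ ρ : ι → α, (∏ i, w i (ρ i)) * G ρ := by
  let e := Equiv.piEquivPiSubtypeProd (· ∈ s) (fun _ : ι => α)
  have split_prod (v : ι → α → R) (σ τ) : ∏ i, v i (e.symm (σ, τ) i) =
      (∏ i : {i // i ∈ s}, v i (σ i)) * ∏ i : {i // i ∉ s}, v i (τ i) := by
    rw [← Fintype.prod_subtype_mul_prod_subtype (· ∈ s)]
    congr! 3 with i _ i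
    · simp [e, i.2]
    · simp [e, i.2]
  have expand (v : ι → α → R) : ∏ i ∈ s, ∑ a, v i a =
      ∑ σ : {i // i ∈ s} → α, ∏ i : {i // i ∈ s}, v i (σ i) := by
    rw [← Finset.prod_coe_sort, Finset.prod_univ_sum, Fintype.piFinset_univ]
  have agree (τ : {i // i ∉ s} → α) : ∏ i : {i // i ∉ s}, u i (τ i) =
      ∏ i : {i // i ∉ s}, w i (τ i) :=
    Finset.prod_congr rfl fun i _ => by rw [huw i i.2]
  have indep (σ σ' τ) : G (e.symm (σ, τ)) = G (e.symm (σ', τ)) :=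
    hG fun i hi => by simp [e, show i ∉ s from hi]
  rw [← e.symm.sum_comp, ← e.symm.sum_comp, Fintype.sum_prod_type, Fintype.sum_prod_type,
    expand, expand, Finset.sum_mul_sum, Finset.sum_mul_sum, Finset.sum_comm]
  refine Finset.sum_congr rfl fun σ _ => Finset.sum_congr rfl fun σ' _ => ?_
  simp only [split_prod, agree, indep σ σ', mul_assoc, ← Finset.mul_sum]
  exact mul_left_comm _ _ _

theorem indicator_pi_prod (s : Finset ι) (T : ι → Set α) (w : ι → α → R) (ρ : ι → α) :
    ((s : Set ι).pi T).indicator (fun ρ => ∏ i, w i (ρ i)) ρ =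
      ∏ i, s.piecewise (fun i => (T i).indicator (w i)) w i (ρ i) := by
  by_cases hρ : ρ ∈ (s : Set ι).pi T
  · rw [Set.indicator_of_mem hρ]
    refine Finset.prod_congr rfl fun i _ => ?_
    by_cases hi : i ∈ s
    · rw [s.piecewise_eq_of_mem _ _ hi, Set.indicator_of_mem (hρ i hi)]
    · rw [s.piecewise_eq_of_notMem _ _ hi]
  · rw [Set.indicator_of_notMem hρ]
    simp only [Set.mem_pi, not_forall] at hρ
    obtain ⟨i, hi, hiT⟩ := hρ
    refine (Finset.prod_eq_zero (Finset.mem_univ i) ?_).symm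
    rw [s.piecewise_eq_of_mem _ _ hi, Set.indicator_of_notMem hiT]

theorem sum_indicator_pi_inter [Fintype α] (s : Finset ι) {w : ι → α → R}
    (hw : ∀ i ∈ s, ∑ a, w i a = 1) (T : ι → Set α) {A : Set (ι → α)}
    (hA : DependsOn (· ∈ A) (s : Set ι)ᶜ) :
    ∑ ρ, ((s : Set ι).pi T ∩ A).indicator (fun ρ => ∏ i, w i (ρ i)) ρ =
      (∏ i ∈ s, ∑ a, (T i).indicator (w i) a) *
        ∑ ρ, A.indicator (fun ρ => ∏ i, w i (ρ i)) ρ := by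
  classical
  have hG : DependsOn (A.indicator (1 : (ι → α) → R)) (s : Set ι)ᶜ := fun ρ σ h => by
    simp only [Set.indicator_apply, show (ρ ∈ A) = (σ ∈ A) from hA h, Pi.one_apply]
  have indicator_eq (F : (ι → α) → R) (ρ) : A.indicator F ρ = F ρ * A.indicator 1 ρ := by
    simp [Set.indicator_apply]
  have swap := prod_sum_mul_sum_prod_mul_comm s
    (fun i hi => s.piecewise_eq_of_notMem (fun i => (T i).indicator (w i)) w hi) hG
  rw [Finset.prod_congr rfl hw, Finset.prod_const_one, one_mul] at swap
  simp only [Set.inter_comm _ A, ← Set.indicator_indicator, indicator_eq (Set.indicator _ _),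
    indicator_eq fun ρ => ∏ i, w i (ρ i), indicator_pi_prod]
  rw [swap]
  congr 1
  exact Finset.prod_congr rfl fun i hi => by rw [s.piecewise_eq_of_mem _ _ hi]

end ProductWeights

section RandomRestrictions

variable {n : ℕ} {p : ℝ}

/-- The probability that a single coordinate of a `p`-random restriction takes the value `a`;
`none` stands for a free variable. -/
noncomputable def coordWeight (p : ℝ) (a : Option Bool) : ℝ :=
  if a = none then p else (1 - p) / 2

/-- The probability of the event `A` under a `p`-random restriction. -/
noncomputable def restrictionProb (p : ℝ) (A : Set (Fin n → Option Bool)) : ℝ :=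
  ∑ ρ, A.indicator (rpWeight p) ρ

theorem rpWeight_eq_prod_coordWeight (p : ℝ) :
    (rpWeight p : (Fin n → Option Bool) → ℝ) = fun ρ => ∏ i, coordWeight p (ρ i) :=
  rfl

theorem sum_coordWeight (p : ℝ) : ∑ a, coordWeight p a = 1 := by
  simp only [coordWeight, Fintype.sum_option, Fintype.sum_bool, reduceCtorEq, if_true, if_false]
  ring

theorem sum_indicator_singleton_coordWeight (p : ℝ) {a : Option Bool} (ha : a ≠ none) :
    ∑ b, ({a} : Set (Option Bool)).indicator (coordWeight p) b = (1 - p) / 2 := by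
  simp [Set.indicator_apply, coordWeight, ha]

theorem sum_indicator_none_pair_coordWeight (p : ℝ) {a : Option Bool} (ha : a ≠ none) :
    ∑ b, ({none, a} : Set (Option Bool)).indicator (coordWeight p) b = (1 + p) / 2 := by
  rw [← Finset.coe_pair, Finset.sum_indicator_subset _ (Finset.subset_univ _),
    Finset.sum_pair ha.symm, coordWeight, coordWeight, if_pos rfl, if_neg ha]
  ring

theorem rpWeight_nonneg (hp₀ : 0 ≤ p) (hp₁ : p ≤ 1) (ρ : Fin n → Option Bool) :
    0 ≤ rpWeight p ρ :=
  Finset.prod_nonneg fun _ _ => by split_ifs <;> linarith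

theorem sum_rpWeight (p : ℝ) : ∑ ρ : Fin n → Option Bool, rpWeight p ρ = 1 := by
  rw [rpWeight_eq_prod_coordWeight, ← Fintype.piFinset_univ,
    ← Finset.prod_univ_sum (fun _ => Finset.univ) (fun _ => coordWeight p)]
  exact Finset.prod_eq_one fun _ _ => sum_coordWeight p

theorem restrictionProb_nonneg (hp₀ : 0 ≤ p) (hp₁ : p ≤ 1) (A : Set (Fin n → Option Bool)) :
    0 ≤ restrictionProb p A :=
  Finset.sum_nonneg fun ρ _ => Set.indicator_nonneg (fun ρ _ => rpWeight_nonneg hp₀ hp₁ ρ) ρ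

theorem restrictionProb_le_one (hp₀ : 0 ≤ p) (hp₁ : p ≤ 1) (A : Set (Fin n → Option Bool)) :
    restrictionProb p A ≤ 1 :=
  (Finset.sum_le_sum fun ρ _ =>
    Set.indicator_le_self' (fun ρ _ => rpWeight_nonneg hp₀ hp₁ ρ) ρ).trans (sum_rpWeight p).le

theorem restrictionProb_pi_inter (p : ℝ) (s : Finset (Fin n)) (T : Fin n → Set (Option Bool))
    {A : Set (Fin n → Option Bool)} (hA : DependsOn (· ∈ A) (s : Set (Fin n))ᶜ) :
    restrictionProb p ((s : Set (Fin n)).pi T ∩ A) =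
      (∏ i ∈ s, ∑ a, (T i).indicator (coordWeight p) a) * restrictionProb p A :=
  sum_indicator_pi_inter s (fun _ _ => sum_coordWeight p) T hA

open Classical in
theorem sum_rpWeight_mul_card {ι : Type*} [Fintype ι] (p : ℝ)
    (A : ι → Set (Fin n → Option Bool)) :
    ∑ ρ, rpWeight p ρ * (Fintype.card {k // ρ ∈ A k} : ℝ) = ∑ k, restrictionProb p (A k) := by
  simp only [restrictionProb, Set.indicator_apply]
  rw [Finset.sum_comm]
  refine Finset.sum_congr rfl fun ρ _ => ?_
  rw [← Finset.sum_filter, Finset.sum_const, nsmul_eq_mul, mul_comm, Fintype.card_subtype]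

theorem sum_restrictionProb_le_one {ι : Type*} [Fintype ι] (hp₀ : 0 ≤ p) (hp₁ : p ≤ 1)
    {A : ι → Set (Fin n → Option Bool)} (hA : Pairwise (Function.onFun Disjoint A)) :
    ∑ k, restrictionProb p (A k) ≤ 1 := by
  classical
  rw [← sum_rpWeight_mul_card, ← sum_rpWeight (n := n) p]
  refine Finset.sum_le_sum fun ρ _ =>
    mul_le_of_le_one_right (rpWeight_nonneg hp₀ hp₁ ρ) ?_
  have card_le_one : Fintype.card {k // ρ ∈ A k} ≤ 1 :=
    Fintype.card_le_one_iff.2 fun k l => Subtype.ext <|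
      hA.eq (Set.not_disjoint_iff.2 ⟨ρ, k.2, l.2⟩)
  exact_mod_cast card_le_one

end RandomRestrictions

section Clauses

variable {n : ℕ}

/-- The variables mentioned by a clause, or fixed by a restriction. Clauses and restrictions have
the same type, and the notions of this section are used for both. -/
def fixedVars (C : Fin n → Option Bool) : Finset (Fin n) :=
  {i | C i ≠ none}

/-- The clause (or restriction) `C` with its values on the variables of `D` forgotten. -/
def eraseVars (D C : Fin n → Option Bool) : Fin n → Option Bool :=
  fun i => if D i = none then C i else none

/-- The restrictions that do not falsify the clause `D`. -/
def consistentWith (D : Fin n → Option Bool) : Set (Fin n → Option Bool) :=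
  (fixedVars D : Set (Fin n)).pi fun i => {none, D i}

/-- The restrictions that satisfy the clause `D`, that is, agree with it on all its variables. -/
def extending (D : Fin n → Option Bool) : Set (Fin n → Option Bool) :=
  (fixedVars D : Set (Fin n)).pi fun i => {D i}

theorem mem_fixedVars {C : Fin n → Option Bool} {i : Fin n} : i ∈ fixedVars C ↔ C i ≠ none := by
  simp [fixedVars]

theorem extending_subset_consistentWith (D : Fin n → Option Bool) :
    extending D ⊆ consistentWith D :=
  Set.pi_mono fun _ _ => Set.subset_insert _ _

theorem dependsOn_eraseVars (D : Fin n → Option Bool) :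
    DependsOn (eraseVars D) (fixedVars D : Set (Fin n))ᶜ := fun C C' h => by
  funext i
  by_cases hi : D i = none
  · simpa [eraseVars, hi] using h i (by simpa [mem_fixedVars] using hi)
  · simp [eraseVars, hi]

theorem dependsOn_mem_preimage_eraseVars (D : Fin n → Option Bool)
    (A : Set (Fin n → Option Bool)) :
    DependsOn (· ∈ eraseVars D ⁻¹' A) (fixedVars D : Set (Fin n))ᶜ := fun _ _ h => by
  simp only [Set.mem_preimage, dependsOn_eraseVars D h]

theorem clauseSat_of_mem_extending {C ρ : Fin n → Option Bool} {x : Fin n → Bool}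
    (hρ : ρ ∈ extending C) (hx : clauseSat ρ x) : clauseSat C x := fun i b hb =>
  hx i b ((hρ i (mem_fixedVars.2 (by simp [hb]))).trans hb)

theorem clauseSat_iff_eraseVars {C D : Fin n → Option Bool} {x : Fin n → Bool}
    (hD : clauseSat D x) :
    clauseSat C x ↔ C ∈ consistentWith D ∧ clauseSat (eraseVars D C) x := by
  constructor
  · refine fun hC => ⟨fun i hi => ?_, fun i b hb => hC i b ?_⟩
    · obtain ⟨d, hd⟩ := Option.ne_none_iff_exists'.1 (mem_fixedVars.1 hi)
      cases hc : C i with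
      | none => exact Or.inl rfl
      | some c => exact Or.inr (by simp [hd, ← hC i c hc, ← hD i d hd])
    · by_cases hi : D i = none <;> simp_all [eraseVars]
  · rintro ⟨hCD, hC⟩ i b hb
    by_cases hi : D i = none
    · exact hC i b (by simpa [eraseVars, hi] using hb)
    · rcases hCD i (mem_fixedVars.2 hi) with h | h
      · simp [h] at hb
      · exact hD i b (h.symm.trans hb)

theorem clauseSat_getD (ρ : Fin n → Option Bool) (x : Fin n → Bool) :
    clauseSat ρ fun i => (ρ i).getD (x i) := fun i b hb => by
  simp [hb]

theorem clauseSat_eraseVars_getD {ρ C : Fin n → Option Bool} {x : Fin n → Bool} :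
    clauseSat (eraseVars ρ C) (fun i => (ρ i).getD (x i)) ↔ clauseSat (eraseVars ρ C) x := by
  refine forall_congr' fun i => forall_congr' fun b => imp_congr_right fun hb => ?_
  have hi : ρ i = none := by
    by_contra hi
    simp [eraseVars, hi] at hb
  simp [hi]

end Clauses

section DecisionFamilies

variable {n : ℕ} {V : Type} {ι : Type*}

/-- `C k` is the first clause of the ordered family `C` that `x` satisfies. -/
def IsFirstSat [LT ι] (C : ι → Fin n → Option Bool) (k : ι) (x : Fin n → Bool) : Prop :=
  clauseSat (C k) x ∧ ∀ j < k, ¬ clauseSat (C j) x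

/-- The decision list with entries `(C k, v k)` computes `f`. Its entries are indexed by an
arbitrary order, so that a sublist is just a restriction to a subtype. -/
def IsComputedBy [LT ι] (C : ι → Fin n → Option Bool) (v : ι → V) (f : (Fin n → Bool) → V) :
    Prop :=
  ∀ x, ∃ k, IsFirstSat C k x ∧ f x = v k

/-- The restrictions under which entry `k` survives: it decides some point of the subcube. -/
def surviving [LT ι] (C : ι → Fin n → Option Bool) (k : ι) : Set (Fin n → Option Bool) :=
  {ρ | ∃ x, IsFirstSat C k x ∧ clauseSat ρ x}

theorem IsComputedBy.exists_DLcomputes [LinearOrder ι] [Fintype ι]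
    {C : ι → Fin n → Option Bool} {v : ι → V} {f : (Fin n → Bool) → V} (h : IsComputedBy C v f) :
    ∃ L : List ((Fin n → Option Bool) × V), DLcomputes L f ∧ L.length = Fintype.card ι := by
  let e : Fin (Fintype.card ι) ≃o ι := Fintype.orderIsoFinOfCardEq ι rfl
  refine ⟨List.ofFn fun a => (C (e a), v (e a)), fun x => ?_, List.length_ofFn⟩
  obtain ⟨k, ⟨hsat, hfirst⟩, hf⟩ := h x
  refine ⟨Fin.cast List.length_ofFn.symm (e.symm k), by simpa using hsat, fun j hj => ?_,
    by simpa using hf⟩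
  rw [List.get_ofFn]
  exact hfirst _ (e.lt_symm_apply.1 (by simpa [Fin.lt_def] using hj))

theorem IsComputedBy.DLsize_le_card [LinearOrder ι] [Fintype ι]
    {C : ι → Fin n → Option Bool} {v : ι → V} {f : (Fin n → Bool) → V} (h : IsComputedBy C v f) :
    DLsize f ≤ Fintype.card ι :=
  Nat.sInf_le h.exists_DLcomputes

theorem isComputedBy_truthTable (f : (Fin n → Bool) → V) :
    IsComputedBy (fun (a : Lex (Fin n → Bool)) i => some (ofLex a i)) (fun a => f (ofLex a)) f :=
  fun x => ⟨toLex x, ⟨fun i b hb => by simpa using hb, fun a ha hsat =>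
    ha.ne (funext fun i => (hsat i _ rfl).symm)⟩, rfl⟩

theorem exists_DLcomputes_length_eq_DLsize (f : (Fin n → Bool) → V) :
    ∃ L : List ((Fin n → Option Bool) × V), DLcomputes L f ∧ L.length = DLsize f :=
  Nat.sInf_mem (s := {m | ∃ L, DLcomputes L f ∧ L.length = m})
    ⟨_, (isComputedBy_truthTable f).exists_DLcomputes⟩

theorem DLcomputes.isComputedBy {L : List ((Fin n → Option Bool) × V)} {f : (Fin n → Bool) → V}
    (h : DLcomputes L f) : IsComputedBy (fun k => (L.get k).1) (fun k => (L.get k).2) f :=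
  fun x => (h x).imp fun _ hk => ⟨⟨hk.1, hk.2.1⟩, hk.2.2⟩

theorem IsComputedBy.restrict [LT ι] {C : ι → Fin n → Option Bool} {v : ι → V}
    {f : (Fin n → Bool) → V} (h : IsComputedBy C v f) (ρ : Fin n → Option Bool) :
    IsComputedBy (fun k : {k // ρ ∈ surviving C k} => eraseVars ρ (C k)) (fun k => v k)
      (restrictFun f ρ) := fun x => by
  let y : Fin n → Bool := fun i => (ρ i).getD (x i)
  have hy : clauseSat ρ y := clauseSat_getD ρ x
  have sat_iff (k : {k // ρ ∈ surviving C k}) :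
      clauseSat (eraseVars ρ (C k)) x ↔ clauseSat (C k) y := by
    obtain ⟨k, z, hkz, hρz⟩ := k
    have hcons : C k ∈ consistentWith ρ := ((clauseSat_iff_eraseVars hρz).1 hkz.1).1
    rw [clauseSat_iff_eraseVars hy, and_iff_right hcons, clauseSat_eraseVars_getD]
  obtain ⟨k, hk, hfk⟩ := h y
  exact ⟨⟨k, y, hk, hy⟩, ⟨(sat_iff _).2 hk.1, fun j hj hsat => hk.2 j hj ((sat_iff j).1 hsat)⟩,
    hfk⟩

theorem mem_surviving_iff [LT ι] {C : ι → Fin n → Option Bool} {k : ι} {ρ : Fin n → Option Bool} :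
    ρ ∈ surviving C k ↔ ρ ∈ consistentWith (C k) ∧ eraseVars (C k) ρ ∈ surviving C k :=
  calc ρ ∈ surviving C k
      ↔ ∃ x, IsFirstSat C k x ∧ ρ ∈ consistentWith (C k) ∧ clauseSat (eraseVars (C k) ρ) x :=
        exists_congr fun _ => and_congr_right fun hx => clauseSat_iff_eraseVars hx.1
    _ ↔ ρ ∈ consistentWith (C k) ∧ eraseVars (C k) ρ ∈ surviving C k :=
        ⟨fun ⟨x, hx, hcons, hρ⟩ => ⟨hcons, x, hx, hρ⟩,
          fun ⟨hcons, x, hx, hρ⟩ => ⟨x, hx, hcons, hρ⟩⟩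

theorem surviving_eq_inter [LT ι] (C : ι → Fin n → Option Bool) (k : ι) :
    surviving C k = consistentWith (C k) ∩ eraseVars (C k) ⁻¹' surviving C k :=
  Set.ext fun _ => mem_surviving_iff

theorem extending_inter_surviving [LT ι] (C : ι → Fin n → Option Bool) (k : ι) :
    extending (C k) ∩ surviving C k = extending (C k) ∩ eraseVars (C k) ⁻¹' surviving C k := by
  conv_lhs => rw [surviving_eq_inter, ← Set.inter_assoc,
    Set.inter_eq_left.2 (extending_subset_consistentWith (C k))]

-- A restriction satisfying `C k` leaves no point for the later entries to decide.
theorem pairwise_disjoint_extending_inter_surviving [LinearOrder ι]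
    (C : ι → Fin n → Option Bool) :
    Pairwise (Function.onFun Disjoint fun k => extending (C k) ∩ surviving C k) := by
  have not_lt {k l : ι} {ρ : Fin n → Option Bool} (hk : ρ ∈ extending (C k))
      (hl : ρ ∈ surviving C l) : ¬ k < l := fun hkl => by
    obtain ⟨x, hx, hρx⟩ := hl
    exact hx.2 k hkl (clauseSat_of_mem_extending hk hρx)
  refine fun k l hkl => Set.disjoint_left.2 fun ρ hk hl => ?_
  exact hkl.lt_or_gt.elim (not_lt hk.1 hl.2) (not_lt hl.1 hk.2)

end DecisionFamilies

section Shrinkage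

variable {n : ℕ} {V : Type} {ι : Type*} {p θ : ℝ}

theorem restrictionProb_extending_inter (p : ℝ) (D : Fin n → Option Bool)
    (A : Set (Fin n → Option Bool)) :
    restrictionProb p (extending D ∩ eraseVars D ⁻¹' A) =
      ((1 - p) / 2) ^ (fixedVars D).card * restrictionProb p (eraseVars D ⁻¹' A) := by
  rw [extending, restrictionProb_pi_inter p _ _ (dependsOn_mem_preimage_eraseVars D A),
    Finset.prod_congr rfl fun i hi => sum_indicator_singleton_coordWeight p (mem_fixedVars.1 hi),
    Finset.prod_const]

theorem restrictionProb_consistentWith_inter (p : ℝ) (D : Fin n → Option Bool)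
    (A : Set (Fin n → Option Bool)) :
    restrictionProb p (consistentWith D ∩ eraseVars D ⁻¹' A) =
      ((1 + p) / 2) ^ (fixedVars D).card * restrictionProb p (eraseVars D ⁻¹' A) := by
  rw [consistentWith, restrictionProb_pi_inter p _ _ (dependsOn_mem_preimage_eraseVars D A),
    Finset.prod_congr rfl fun i hi => sum_indicator_none_pair_coordWeight p (mem_fixedVars.1 hi),
    Finset.prod_const]

theorem restrictionProb_surviving_le [LT ι] (hp₀ : 0 ≤ p) (hp₁ : p ≤ 1) (hθ₁ : θ ≤ 1)
    (hθ : ((1 - p) / 2) ^ θ = (1 + p) / 2) (C : ι → Fin n → Option Bool) (k : ι) :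
    restrictionProb p (surviving C k) ≤
      restrictionProb p (extending (C k) ∩ surviving C k) ^ θ := by
  rw [extending_inter_surviving, restrictionProb_extending_inter]
  conv_lhs => rw [surviving_eq_inter, restrictionProb_consistentWith_inter, ← hθ]
  exact rpow_pow_mul_le_rpow (by linarith) (restrictionProb_nonneg hp₀ hp₁ _)
    (restrictionProb_le_one hp₀ hp₁ _) hθ₁ _

theorem sum_restrictionProb_surviving_le [LinearOrder ι] [Fintype ι] (hp₀ : 0 ≤ p) (hp₁ : p ≤ 1)
    (hθ₀ : 0 ≤ θ) (hθ₁ : θ ≤ 1) (hθ : ((1 - p) / 2) ^ θ = (1 + p) / 2)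
    (C : ι → Fin n → Option Bool) :
    ∑ k, restrictionProb p (surviving C k) ≤ (Fintype.card ι : ℝ) ^ (1 - θ) := by
  let a (k : ι) : ℝ := restrictionProb p (extending (C k) ∩ surviving C k)
  have ha₀ (k : ι) : 0 ≤ a k := restrictionProb_nonneg hp₀ hp₁ _
  have ha₁ : ∑ k, a k ≤ 1 :=
    sum_restrictionProb_le_one hp₀ hp₁ (pairwise_disjoint_extending_inter_surviving C)
  calc ∑ k, restrictionProb p (surviving C k)
      ≤ ∑ k, a k ^ θ :=
        Finset.sum_le_sum fun k _ => restrictionProb_surviving_le hp₀ hp₁ hθ₁ hθ C k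
    _ ≤ (Fintype.card ι : ℝ) ^ (1 - θ) * (∑ k, a k) ^ θ :=
        sum_rpow_le_card_rpow_mul_rpow_sum _ (fun k _ => ha₀ k) hθ₀ hθ₁
    _ ≤ (Fintype.card ι : ℝ) ^ (1 - θ) :=
        mul_le_of_le_one_right (by positivity)
          (Real.rpow_le_one (Finset.sum_nonneg fun k _ => ha₀ k) ha₁ hθ₀)

theorem IsComputedBy.sum_rpWeight_mul_DLsize_le [LinearOrder ι] [Fintype ι] (hp₀ : 0 ≤ p)
    (hp₁ : p ≤ 1) {C : ι → Fin n → Option Bool} {v : ι → V} {f : (Fin n → Bool) → V}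
    (h : IsComputedBy C v f) :
    ∑ ρ, rpWeight p ρ * (DLsize (restrictFun f ρ) : ℝ) ≤
      ∑ k, restrictionProb p (surviving C k) := by
  classical
  rw [← sum_rpWeight_mul_card]
  refine Finset.sum_le_sum fun ρ _ => mul_le_mul_of_nonneg_left ?_ (rpWeight_nonneg hp₀ hp₁ ρ)
  exact_mod_cast (h.restrict ρ).DLsize_le_card

end Shrinkage

/-- Shrinkage of decision lists: `E[DL(f↾R_p)] ≤ DL(f)^{γ(p)}`
with `γ(p) = log_{2/(1-p)}((1+p)/(1-p))`. -/
theorem dl_shrinkage {n : ℕ} {V : Type} (f : (Fin n → Bool) → V) (p : ℝ)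
    (hp0 : 0 ≤ p) (hp1 : p < 1) :
    ∑ ρ : Fin n → Option Bool, rpWeight p ρ * (DLsize (restrictFun f ρ) : ℝ)
      ≤ (DLsize f : ℝ) ^ Real.logb (2 / (1 - p)) ((1 + p) / (1 - p)) := by
  obtain ⟨L, hL, hlen⟩ := exists_DLcomputes_length_eq_DLsize f
  have hq₀ : 0 < (1 - p) / 2 := by linarith
  have hq₁ : (1 - p) / 2 < 1 := by linarith
  have hr₀ : 0 < (1 + p) / 2 := by linarith
  set θ : ℝ := Real.logb ((1 - p) / 2) ((1 + p) / 2) with hθ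
  have hγ : Real.logb (2 / (1 - p)) ((1 + p) / (1 - p)) = 1 - θ := by
    rw [hθ, ← logb_inv_div_self hq₀ hq₁.ne hr₀.ne', inv_div, div_div_div_cancel_right₀ two_ne_zero]
  have hθ₀ : 0 ≤ θ := Real.logb_nonneg_of_base_lt_one hq₀ hq₁ hr₀ (by linarith)
  have hθ₁ : θ ≤ 1 := by
    rw [hθ, Real.logb_le_iff_le_rpow_of_base_lt_one hq₀ hq₁ hr₀, Real.rpow_one]
    linarith
  rw [hγ, ← hlen, ← Fintype.card_fin L.length]
  exact (hL.isComputedBy.sum_rpWeight_mul_DLsize_le hp0 hp1.le).trans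
    (sum_restrictionProb_surviving_le hp0 hp1.le hθ₀ hθ₁ (Real.rpow_logb hq₀ hq₁.ne hr₀) _)
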